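/- The rate region achievable without the PU priority constraint is contained in the linearized rate region of sensing-based stationary policies: R_2 ⊆ R̂_0. (Theorem 1) -/

import Mathlib

open Finset

/-- Linearized rate region `R̂_0`. -/
def linRegion {S : Type*} [Fintype S] (I : S → ℕ)
    (P rs rp : (s : S) → Fin (I s + 1) → ℝ)
    (Phat : S → ℝ) (lam : ℝ) : Set (S → ℝ) :=
  {rbar | ∃ qB qE : (s : S) → Fin (I s + 1) → ℝ,
    (∀ s i, 0 ≤ qB s i) ∧ (∀ s i, 0 ≤ qE s i) ∧
    (∑ s, ∑ i, rp s i * qB s i) = lam ∧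
    (∀ s, (∑ i, P s i * qE s i) + (∑ i, P s i * qB s i) ≤ Phat s) ∧
    ((∑ s, ∑ i, qE s i) + (∑ s, ∑ i, qB s i)) = 1 ∧
    (∀ s, rbar s = ∑ i, rs s i * qE s i)}

/-- Unconstrained-priority rate region `R_2`. -/
def priorityFreeRegion {S : Type*} [Fintype S] (I : S → ℕ)
    (P rs rp : (s : S) → Fin (I s + 1) → ℝ)
    (Phat : S → ℝ) (lam : ℝ) : Set (S → ℝ) :=
  {rbar | ∃ p0 p1 : (s : S) → Fin (I s + 1) → ℝ,
    (∀ s i, 0 ≤ p0 s i) ∧ (∀ s i, 0 ≤ p1 s i) ∧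
    ((∑ s, ∑ i, p0 s i) + (∑ s, ∑ i, p1 s i)) = 1 ∧
    lam ≤ (∑ s, ∑ i, rp s i * p1 s i) ∧
    (∀ s, (∑ i, P s i * p0 s i) + (∑ i, P s i * p1 s i) ≤ Phat s) ∧
    (∀ s, rbar s = ∑ i, rs s i * p0 s i)}

/-! Only the `p(0, ·, ·)` part of a point of `R_2` earns secondary rate, so surplus primary service
can be discarded. Scale `p(1, ·, ·)` by the `θ ∈ [0, 1]` that makes the primary service rate exactly
`λ_p`, and give the time this releases for each user to that user's idle action `i = 0` in the slots
where the primary queue is empty. Idling earns no rate and costs the least power, so the rates are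
unchanged and the power budgets still hold. -/

section RedirectTo

variable {ι R : Type*} [Fintype ι] [DecidableEq ι]

/-- Thinning a time-sharing vector `q` to `θ • q` releases the mass `(1 - θ) * ∑ i, q i`;
`redirectTo a θ p q` is the vector `p` with this mass added at the index `a`. -/
def redirectTo [Ring R] (a : ι) (θ : R) (p q : ι → R) : ι → R :=
  p + Pi.single a ((1 - θ) * ∑ i, q i)

lemma dotProduct_redirectTo [Ring R] (f : ι → R) (a : ι) (θ : R) (p q : ι → R) :
    f ⬝ᵥ redirectTo a θ p q = f ⬝ᵥ p + f a * ((1 - θ) * ∑ i, q i) := by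
  rw [redirectTo, dotProduct_add, dotProduct_single]

lemma dotProduct_redirectTo_of_apply_eq_zero [Ring R] {f : ι → R} {a : ι} (ha : f a = 0)
    (θ : R) (p q : ι → R) : f ⬝ᵥ redirectTo a θ p q = f ⬝ᵥ p := by
  rw [dotProduct_redirectTo, ha, zero_mul, add_zero]

lemma sum_redirectTo_add_sum_smul [Ring R] (a : ι) (θ : R) (p q : ι → R) :
    ∑ i, redirectTo a θ p q i + ∑ i, (θ • q) i = ∑ i, p i + ∑ i, q i := by
  have hmass : ∑ i, redirectTo a θ p q i = ∑ i, p i + (1 - θ) * ∑ i, q i := by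
    simpa only [one_dotProduct, Pi.one_apply, one_mul] using dotProduct_redirectTo 1 a θ p q
  simp only [hmass, Pi.smul_apply, smul_eq_mul, ← Finset.mul_sum]
  noncomm_ring

lemma redirectTo_nonneg [Ring R] [PartialOrder R] [IsOrderedRing R] (a : ι) {θ : R} (hθ : θ ≤ 1)
    {p q : ι → R} (hp : 0 ≤ p) (hq : 0 ≤ q) : 0 ≤ redirectTo a θ p q :=
  add_nonneg hp <| Pi.single_nonneg.2 <|
    mul_nonneg (sub_nonneg.2 hθ) (Finset.sum_nonneg fun i _ => hq i)

lemma dotProduct_redirectTo_add_dotProduct_smul_le [CommRing R] [PartialOrder R]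
    [IsOrderedRing R] {f : ι → R} {a : ι} (ha : ∀ i, f a ≤ f i) {θ : R} (hθ : θ ≤ 1)
    (p : ι → R) {q : ι → R} (hq : 0 ≤ q) :
    f ⬝ᵥ redirectTo a θ p q + f ⬝ᵥ (θ • q) ≤ f ⬝ᵥ p + f ⬝ᵥ q := by
  have hcheap : f a * ∑ i, q i ≤ f ⬝ᵥ q := by
    rw [Finset.mul_sum]
    exact Finset.sum_le_sum fun i _ => mul_le_mul_of_nonneg_right (ha i) (hq i)
  calc
    f ⬝ᵥ redirectTo a θ p q + f ⬝ᵥ (θ • q)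
        = f ⬝ᵥ p + ((1 - θ) * (f a * ∑ i, q i) + θ * (f ⬝ᵥ q)) := by
      rw [dotProduct_redirectTo, dotProduct_smul, smul_eq_mul]
      ring
    _ ≤ f ⬝ᵥ p + ((1 - θ) * (f ⬝ᵥ q) + θ * (f ⬝ᵥ q)) := by
      gcongr
    _ = f ⬝ᵥ p + f ⬝ᵥ q := by ring

end RedirectTo

lemma exists_mem_Icc_mul_eq {K : Type*} [Field K] [LinearOrder K] [IsStrictOrderedRing K]
    {x y : K} (hx : 0 ≤ x) (hxy : x ≤ y) : ∃ θ ∈ Set.Icc (0 : K) 1, θ * y = x := by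
  have hmem : x ∈ Set.Icc (0 * y) (1 * y) := by simpa using ⟨hx, hxy⟩
  rwa [← Set.image_mul_right_Icc zero_le_one (hx.trans hxy)] at hmem

theorem priorityFree_subset_lin_general {S : Type*} [Fintype S] (I : S → ℕ)
    (P rs rp : (s : S) → Fin (I s + 1) → ℝ) (Phat : S → ℝ) (lam : ℝ)
    (hP : ∀ s i, P s 0 ≤ P s i) (hrs0 : ∀ s, rs s 0 = 0) (hlam : 0 ≤ lam) :
    priorityFreeRegion I P rs rp Phat lam ⊆ linRegion I P rs rp Phat lam := by
  rintro rbar ⟨p0, p1, hp0, hp1, hmass, hserve, hpow, hrate⟩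
  obtain ⟨θ, ⟨hθ0, hθ1⟩, hθ⟩ := exists_mem_Icc_mul_eq hlam hserve
  refine ⟨fun s => θ • p1 s, fun s => redirectTo 0 θ (p0 s) (p1 s),
    fun s i => mul_nonneg hθ0 (hp1 s i), fun s => redirectTo_nonneg 0 hθ1 (hp0 s) (hp1 s),
    ?served, fun s => ?power, ?mass, fun s => ?rate⟩
  case served =>
    calc
      ∑ s, rp s ⬝ᵥ (θ • p1 s) = θ * ∑ s, rp s ⬝ᵥ p1 s := by
        simp only [dotProduct_smul, smul_eq_mul, Finset.mul_sum]
      _ = lam := hθ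
  case power =>
    exact (dotProduct_redirectTo_add_dotProduct_smul_le (hP s) hθ1 (p0 s) (hp1 s)).trans (hpow s)
  case mass =>
    rw [← Finset.sum_add_distrib] at hmass ⊢
    simpa only [sum_redirectTo_add_sum_smul] using hmass
  case rate =>
    exact (hrate s).trans (dotProduct_redirectTo_of_apply_eq_zero (hrs0 s) θ (p0 s) (p1 s)).symm

/-- **Theorem 1.** The rate region achievable without the PU priority constraint
is contained in the linearized rate region of sensing-based stationary policies:
`R_2 ⊆ R̂_0`. -/
theorem priorityFree_subset_lin
    {S : Type*} [Fintype S] [Nonempty S]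
    (I : S → ℕ) (hI : ∀ s, 1 ≤ I s)
    (P rs rp : (s : S) → Fin (I s + 1) → ℝ) (rp0 : ℝ)
    (Phat : S → ℝ) (lam : ℝ)
    (hP0 : ∀ s, P s 0 = 0) (hPnn : ∀ s i, 0 ≤ P s i)
    (hrs0 : ∀ s, rs s 0 = 0) (hrs : ∀ s i, rs s i ∈ Set.Icc (0:ℝ) 1)
    (hrp : ∀ s i, rp s i ∈ Set.Icc (0:ℝ) 1) (hrp00 : ∀ s, rp s 0 = rp0)
    (hrp0 : rp0 ∈ Set.Icc (0:ℝ) 1)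
    (hPhat : ∀ s, 0 ≤ Phat s) (hlam : 0 ≤ lam) :
    priorityFreeRegion I P rs rp Phat lam ⊆ linRegion I P rs rp Phat lam := by
  exact priorityFree_subset_lin_general I P rs rp Phat lam
    (fun s i => (hP0 s).trans_le (hPnn s i)) hrs0 hlam
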